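/- Let $A$ be an almost Poisson algebra over a field $k$ of characteristic zero, with commutative associative product $ab$ and anticommutative biderivation bracket $\{a,b\}$, and let $c\in k$ be any scalar. Then the star product $a\star b := ab + c\,\{a,b\}$ makes $A$ a Kokoris algebra: for all $a_1,a_2,a_3\in A$, $J_\star(a_1,a_2,a_3) = 4(a_1,a_2,a_3)_\star - [[a_1,a_3]_\star,a_2]_\star$, where $[x,y]_\star = x\star y - y\star x$, $(x,y,z)_\star = (x\star y)\star z - x\star(y\star z)$, and $J_\star$ is the Jacobiator of $[\,,\,]_\star$. -/

import Mathlib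

/-!
Split the star product into its symmetric part `m` and its antisymmetric part `c • br`. Only the
latter survives in the commutator `[x, y]⋆ = 2c{x, y}`, so double commutators are `4c²` times double
brackets. The associator is a polynomial of degree two in `c`: its constant term vanishes by
associativity, its linear term by the Leibniz rule in both arguments, and its quadratic term is the
associator `{{x, y}, z} + {{y, z}, x}` of the bracket, that is, the Jacobiator of the bracket with
one summand missing. That summand is what the correction term `-[[x, z]⋆, y]⋆` supplies.
-/

section

variable {k A : Type*} [CommRing k] [AddCommGroup A] [Module k A]

/-- The commutator `[x, y] = xy - yx` of a bilinear product, as a bilinear map. -/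
def bilinCommutator (p : A →ₗ[k] A →ₗ[k] A) : A →ₗ[k] A →ₗ[k] A :=
  p - p.flip

/-- The associator `(x, y, z) = (xy)z - x(yz)` of a bilinear product. The `associator` of Mathlib is
about the multiplication of a ring, whereas two products on the same module occur here. -/
def bilinAssociator (p : A →ₗ[k] A →ₗ[k] A) (x y z : A) : A :=
  p (p x y) z - p x (p y z)

/-- The Jacobiator of a bilinear bracket: the cyclic sum that the Jacobi identity would kill. -/
def bilinJacobiator (b : A →ₗ[k] A →ₗ[k] A) (x y z : A) : A :=
  b (b x y) z + b (b y z) x + b (b z x) y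

/-- The identity defining Kokoris algebras, for a bilinear product `p`. -/
def IsKokoris (p : A →ₗ[k] A →ₗ[k] A) : Prop :=
  ∀ x y z : A, bilinJacobiator (bilinCommutator p) x y z =
    (4 : k) • bilinAssociator p x y z - bilinCommutator p (bilinCommutator p x z) y

/-- The axioms of an almost Poisson algebra, for a product `m` and a bracket `br`. Anticommutativity
is skew-symmetry, so it does not force `br a a = 0` when `2` is a zero divisor on `A`. -/
structure IsAlmostPoisson (m br : A →ₗ[k] A →ₗ[k] A) : Prop where
  mul_comm : ∀ a b : A, m a b = m b a
  mul_assoc : ∀ a b c : A, m (m a b) c = m a (m b c)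
  bracket_skew : ∀ a b : A, br a b = -br b a
  leibniz : ∀ a₁ a₂ a₃ : A, br (m a₁ a₂) a₃ = m (br a₁ a₃) a₂ + m a₁ (br a₂ a₃)

/-- The two-term star product `x ⋆ y = xy + c{x, y}`; deformation quantization takes `c = ħ/2`. -/
def starProduct (m br : A →ₗ[k] A →ₗ[k] A) (c : k) : A →ₗ[k] A →ₗ[k] A :=
  m + c • br

variable {m br : A →ₗ[k] A →ₗ[k] A}

theorem bilinJacobiator_smul (b : A →ₗ[k] A →ₗ[k] A) (r : k) (x y z : A) :
    bilinJacobiator (r • b) x y z = r ^ 2 • bilinJacobiator b x y z := by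
  simp only [bilinJacobiator, LinearMap.smul_apply, map_smul]
  module

theorem bilinAssociator_of_skew (hskew : ∀ x y : A, br x y = -br y x) (x y z : A) :
    bilinAssociator br x y z = br (br x y) z + br (br y z) x := by
  rw [bilinAssociator, hskew x (br y z), sub_neg_eq_add]

theorem bilinCommutator_starProduct (hcomm : ∀ x y : A, m x y = m y x)
    (hskew : ∀ x y : A, br x y = -br y x) (c : k) :
    bilinCommutator (starProduct m br c) = (2 * c) • br := by
  ext x y
  simp only [bilinCommutator, starProduct, LinearMap.sub_apply, LinearMap.flip_apply,
    LinearMap.add_apply, LinearMap.smul_apply]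
  rw [hcomm y x, hskew y x]
  module

theorem bilinAssociator_add_smul (p q : A →ₗ[k] A →ₗ[k] A) (c : k) (x y z : A) :
    bilinAssociator (p + c • q) x y z =
      bilinAssociator p x y z
        + c • ((q (p x y) z + p (q x y) z) - (q x (p y z) + p x (q y z)))
        + c ^ 2 • bilinAssociator q x y z := by
  simp only [bilinAssociator, LinearMap.add_apply, LinearMap.smul_apply, map_add, map_smul]
  module

namespace IsAlmostPoisson

theorem leibniz_right (h : IsAlmostPoisson m br) (x y z : A) :
    br x (m y z) = m (br x y) z + m y (br x z) := by
  rw [h.bracket_skew x (m y z), h.leibniz, h.bracket_skew y x, h.bracket_skew z x]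
  simp only [map_neg, LinearMap.neg_apply, neg_add, neg_neg]

theorem bracket_mul_add_mul_bracket (h : IsAlmostPoisson m br) (x y z : A) :
    br (m x y) z + m (br x y) z = br x (m y z) + m x (br y z) := by
  rw [h.leibniz, h.leibniz_right, h.mul_comm (br x z) y]
  abel

theorem bilinAssociator_starProduct (h : IsAlmostPoisson m br) (c : k) (x y z : A) :
    bilinAssociator (starProduct m br c) x y z = c ^ 2 • (br (br x y) z + br (br y z) x) := by
  have constant_term : bilinAssociator m x y z = 0 := sub_eq_zero.mpr (h.mul_assoc x y z)
  have linear_term : br (m x y) z + m (br x y) z - (br x (m y z) + m x (br y z)) = 0 :=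
    sub_eq_zero.mpr (h.bracket_mul_add_mul_bracket x y z)
  rw [starProduct, bilinAssociator_add_smul, constant_term, linear_term,
    bilinAssociator_of_skew h.bracket_skew, smul_zero, zero_add, zero_add]

end IsAlmostPoisson

theorem almostPoisson_star_isKokoris_general (h : IsAlmostPoisson m br) (c : k) :
    IsKokoris (starProduct m br c) := by
  intro x y z
  have correction_term : ((2 * c) • br) (((2 * c) • br) x z) y =
      -((2 * c) ^ 2 • br (br z x) y) := by
    simp only [LinearMap.smul_apply, h.bracket_skew x z, map_smul, map_neg, LinearMap.neg_apply]
    module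
  rw [bilinCommutator_starProduct h.mul_comm h.bracket_skew, bilinJacobiator_smul,
    h.bilinAssociator_starProduct, correction_term, bilinJacobiator]
  module

end

/-- For an almost Poisson algebra and any scalar `c`, the star
product `a ⋆ b = ab + c{a,b}` satisfies the Kokoris identity
`J⋆(a₁,a₂,a₃) = 4(a₁,a₂,a₃)⋆ - [[a₁,a₃]⋆,a₂]⋆`. -/
theorem almostPoisson_star_isKokoris
    {k A : Type*} [Field k] [CharZero k] [AddCommGroup A] [Module k A]
    (m : A →ₗ[k] A →ₗ[k] A) (br : A →ₗ[k] A →ₗ[k] A) (c : k)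
    (hcomm : ∀ a b : A, m a b = m b a)
    (hassoc : ∀ a b c : A, m (m a b) c = m a (m b c))
    (hanti : ∀ a b : A, br a b = - br b a)
    (hleib : ∀ a₁ a₂ a₃ : A, br (m a₁ a₂) a₃ = m (br a₁ a₃) a₂ + m a₁ (br a₂ a₃)) :
    ∀ a₁ a₂ a₃ : A,
      let star : A → A → A := fun x y => m x y + c • br x y
      let lb : A → A → A := fun x y => star x y - star y x
      let asc : A → A → A → A := fun x y z => star (star x y) z - star x (star y z)
      lb (lb a₁ a₂) a₃ + lb (lb a₂ a₃) a₁ + lb (lb a₃ a₁) a₂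
        = (4 : k) • asc a₁ a₂ a₃ - lb (lb a₁ a₃) a₂ :=
  almostPoisson_star_isKokoris_general ⟨hcomm, hassoc, hanti, hleib⟩ c
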